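/- arXiv:1707.02338 — 5 statements merged into one kernel-verified Lean document; each statement's English description precedes it below -/
import Mathlib

section
/- For all natural numbers p and q, the geometric algebra G_{p+1,q+1} is isomorphic as an ℝ-algebra to the algebra of 2×2 matrices with entries in G_{p,q}: G_{p+1,q+1} ≃ₐ[ℝ] Matrix (Fin 2) (Fin 2) G_{p,q}. -/
noncomputable section

/-- The quadratic form of signature `(p, q)` on `Fin (p + q) → ℝ`:
`Q_{p,q}(x) = Σ_{i<p} x_i² − Σ_{p≤i<p+q} x_i²`. -/
def Q (p q : ℕ) : QuadraticForm ℝ (Fin (p + q) → ℝ) :=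
  QuadraticMap.weightedSumSquares ℝ (fun i : Fin (p + q) => if (i : ℕ) < p then (1 : ℝ) else -1)

/-- The geometric algebra `G_{p,q}`, the Clifford algebra of `Q p q`. -/
abbrev G (p q : ℕ) : Type := CliffordAlgebra (Q p q)

/-!
Adding one positive and one negative direction amounts to adding a hyperbolic plane `H`, with
`H (s, t) = s t`. In the Clifford algebra of `Q₀ ⊕ H` the two isotropic basis vectors `a`, `b` of
`H` satisfy `a² = b² = 0` and `ab + ba = 1`, so `ab, a, b, ba` are `2 × 2` matrix units. The vectors
`v` of `Q₀` anticommute with `a` and `b`, and so does the involution `⁅a, b⁆ = ab - ba`; hence the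
products `v ⁅a, b⁆` square to `Q₀ v` and generate a copy of the Clifford algebra of `Q₀` commuting
with the matrix units. This works over every commutative ring.
-/

open CliffordAlgebra QuadraticMap

section MatrixUnits

variable {R A B n : Type*} [CommSemiring R] [Semiring A] [Semiring B] [Algebra R A] [Algebra R B]
  [Fintype n] [DecidableEq n]

/-- A full system of `n × n` matrix units in a semiring: elements multiplying like the elementary
matrices, with the diagonal ones summing to `1`. -/
structure IsMatrixUnits (e : n → n → B) : Prop where
  mul_eq : ∀ i j k l, e i j * e k l = if j = k then e i l else 0
  sum_diag : ∑ i, e i i = 1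

/-- The algebra homomorphism `X ↦ ∑ φ (X i j) e i j` on matrices over `A`, given matrix units `e`
in `B` that commute with the image of `φ : A → B`. -/
def IsMatrixUnits.lift {e : n → n → B} (he : IsMatrixUnits e) (φ : A →ₐ[R] B)
    (hφ : ∀ i j x, Commute (e i j) (φ x)) : Matrix n n A →ₐ[R] B :=
  AlgHom.ofLinearMap
    (Matrix.liftLinear R fun i j ↦ (LinearMap.mulRight R (e i j)).comp φ.toLinearMap)
    (by simp [Matrix.liftLinear_apply, Matrix.one_apply, apply_ite φ, ite_mul, he.sum_diag])
    (fun X Y ↦ by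
      have entry_mul (i j k l : n) : φ (X i j) * e i j * (φ (Y k l) * e k l) =
          if j = k then φ (X i j * Y k l) * e i l else 0 := by
        rw [(hφ i j _).mul_mul_mul_comm, ← map_mul, he.mul_eq, mul_ite, mul_zero]
      simp only [Matrix.liftLinear_apply, LinearMap.comp_apply, AlgHom.toLinearMap_apply,
        LinearMap.mulRight_apply, Finset.sum_mul, Finset.mul_sum, entry_mul, Matrix.mul_apply,
        map_sum, Finset.sum_ite_eq', Finset.mem_univ, if_true]
      rw [Finset.sum_comm_cycle]
      exact Finset.sum_congr rfl fun i _ ↦ Finset.sum_comm)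

theorem IsMatrixUnits.lift_apply {e : n → n → B} (he : IsMatrixUnits e) (φ : A →ₐ[R] B)
    (hφ : ∀ i j x, Commute (e i j) (φ x)) (X : Matrix n n A) :
    he.lift φ hφ X = ∑ i, ∑ j, φ (X i j) * e i j :=
  Matrix.liftLinear_apply ..

end MatrixUnits

section HyperbolicPair

variable {R A B : Type*} [CommSemiring R] [Semiring A] [Ring B] [Algebra R A] [Algebra R B]
  {a b x y : B}

theorem commute_mul_of_semiconjBy_neg (hx : SemiconjBy x a (-a)) (hy : SemiconjBy y a (-a)) :
    Commute (x * y) a := by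
  have hx_neg : SemiconjBy x (-a) a := by simpa only [neg_neg] using hx.neg_right
  exact hx_neg.mul_left hy

theorem commute_lie_of_semiconjBy_neg (ha : SemiconjBy x a (-a)) (hb : SemiconjBy x b (-b)) :
    Commute x ⁅a, b⁆ := by
  have hab : Commute x (a * b) := neg_mul_neg a b ▸ ha.mul_right hb
  have hba : Commute x (b * a) := neg_mul_neg b a ▸ hb.mul_right ha
  exact hab.sub_right hba

/-- Two elements of a ring satisfying the Clifford relations of a pair of isotropic vectors spanning
a hyperbolic plane. -/
structure IsHyperbolicPair (a b : B) : Prop where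
  left_sq : a * a = 0
  right_sq : b * b = 0
  mul_add_mul_swap : a * b + b * a = 1

namespace IsHyperbolicPair

theorem symm (h : IsHyperbolicPair a b) : IsHyperbolicPair b a :=
  ⟨h.right_sq, h.left_sq, by rw [add_comm, h.mul_add_mul_swap]⟩

theorem mul_mul_left (h : IsHyperbolicPair a b) : a * b * a = a := by
  rw [eq_sub_of_add_eq h.mul_add_mul_swap, sub_mul, mul_assoc b, h.left_sq]
  simp

theorem isMatrixUnits (h : IsHyperbolicPair a b) : IsMatrixUnits !![a * b, a; b, b * a] where
  mul_eq i j k l := by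
    have left_sq_mul (y : B) : a * (a * y) = 0 := by rw [← mul_assoc, h.left_sq, zero_mul]
    have right_sq_mul (y : B) : b * (b * y) = 0 := by rw [← mul_assoc, h.right_sq, zero_mul]
    have left_right_left : a * (b * a) = a := by rw [← mul_assoc, h.mul_mul_left]
    have right_left_right : b * (a * b) = b := by rw [← mul_assoc, h.symm.mul_mul_left]
    fin_cases i <;> fin_cases j <;> fin_cases k <;> fin_cases l <;>
      simp [mul_assoc, h.left_sq, h.right_sq, left_sq_mul, right_sq_mul, left_right_left,
        right_left_right]
  sum_diag := by simpa using h.mul_add_mul_swap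

/-- `IsMatrixUnits.lift` for the matrix units `!![a * b, a; b, b * a]` of a hyperbolic pair. -/
def matrixLift (h : IsHyperbolicPair a b) (φ : A →ₐ[R] B) (ha : ∀ x, Commute a (φ x))
    (hb : ∀ x, Commute b (φ x)) : Matrix (Fin 2) (Fin 2) A →ₐ[R] B :=
  h.isMatrixUnits.lift φ fun i j x ↦ by
    fin_cases i <;> fin_cases j
    exacts [(ha x).mul_left (hb x), ha x, hb x, (hb x).mul_left (ha x)]

theorem matrixLift_apply (h : IsHyperbolicPair a b) (φ : A →ₐ[R] B) (ha : ∀ x, Commute a (φ x))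
    (hb : ∀ x, Commute b (φ x)) (X : Matrix (Fin 2) (Fin 2) A) :
    h.matrixLift φ ha hb X =
      φ (X 0 0) * (a * b) + φ (X 0 1) * a + (φ (X 1 0) * b + φ (X 1 1) * (b * a)) :=
  (IsMatrixUnits.lift_apply ..).trans (by simp [Fin.sum_univ_two])

theorem lie_mul_left (h : IsHyperbolicPair a b) : ⁅a, b⁆ * a = a := by
  rw [Ring.lie_def, sub_mul, h.mul_mul_left, mul_assoc, h.left_sq, mul_zero, sub_zero]

theorem left_mul_lie (h : IsHyperbolicPair a b) : a * ⁅a, b⁆ = -a := by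
  rw [Ring.lie_def, mul_sub, ← mul_assoc, h.left_sq, zero_mul, ← mul_assoc, h.mul_mul_left,
    zero_sub]

theorem lie_mul_self (h : IsHyperbolicPair a b) : ⁅a, b⁆ * ⁅a, b⁆ = 1 :=
  calc ⁅a, b⁆ * ⁅a, b⁆
      = ⁅a, b⁆ * a * b + ⁅b, a⁆ * b * a := by simp only [Ring.lie_def]; noncomm_ring
    _ = 1 := by rw [h.lie_mul_left, h.symm.lie_mul_left, h.mul_add_mul_swap]

theorem semiconjBy_lie_left (h : IsHyperbolicPair a b) : SemiconjBy ⁅a, b⁆ a (-a) := by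
  rw [SemiconjBy, neg_mul, h.lie_mul_left, h.left_mul_lie, neg_neg]

theorem semiconjBy_lie_right (h : IsHyperbolicPair a b) : SemiconjBy ⁅a, b⁆ b (-b) := by
  have h_swap : ⁅a, b⁆ = -⁅b, a⁆ := by simp only [Ring.lie_def, neg_sub]
  rw [h_swap]
  exact h.symm.semiconjBy_lie_left.neg_left

theorem mul_lie_mul_self (h : IsHyperbolicPair a b) (ha : SemiconjBy x a (-a))
    (hb : SemiconjBy x b (-b)) : x * ⁅a, b⁆ * (x * ⁅a, b⁆) = x * x := by
  rw [(commute_lie_of_semiconjBy_neg ha hb).symm.mul_mul_mul_comm, h.lie_mul_self, mul_one]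

end IsHyperbolicPair

end HyperbolicPair

section QuadraticForms

variable {R l m n : Type*} [Fintype l] [Fintype m] [Fintype n]

section CommSemiring

variable [CommSemiring R]

variable (R) in
/-- The hyperbolic plane over `R`: the quadratic form `(s, t) ↦ s * t`. -/
def hyperbolicPlane : QuadraticForm R (R × R) :=
  linMulLin (LinearMap.fst R R R) (LinearMap.snd R R R)

@[simp]
theorem hyperbolicPlane_apply (u : R × R) : hyperbolicPlane R u = u.1 * u.2 :=
  rfl

/-- A partition of the index set splits a weighted sum of squares as an orthogonal sum. -/
def weightedSumSquaresIsometryEquivProd {w : n → R} {u : l → R} {v : m → R} (e : l ⊕ m ≃ n)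
    (hu : ∀ i, w (e (.inl i)) = u i) (hv : ∀ j, w (e (.inr j)) = v j) :
    (weightedSumSquares R w).IsometryEquiv
      ((weightedSumSquares R u).prod (weightedSumSquares R v)) where
  toLinearEquiv :=
    (LinearEquiv.funCongrLeft R R e).trans (LinearEquiv.sumArrowLequivProdArrow l m R R)
  map_app' x := by
    simp [← e.sum_comp, Fintype.sum_sum_type, LinearEquiv.funCongrLeft_apply, hu, hv]

theorem weightedSumSquares_const_succ_equivalent_prod (c : R) (k : ℕ) :
    (weightedSumSquares R fun _ : Fin (k + 1) ↦ c).Equivalent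
      ((weightedSumSquares R fun _ : Fin k ↦ c).prod (weightedSumSquares R fun _ : Fin 1 ↦ c)) :=
  ⟨weightedSumSquaresIsometryEquivProd finSumFinEquiv (fun _ ↦ rfl) (fun _ ↦ rfl)⟩

end CommSemiring

/-- `x² - y² = (x + y) (x - y)`, as an isometry onto the hyperbolic plane. -/
def weightedSumSquaresProdIsometryEquivHyperbolicPlane [CommRing R] [Invertible (2 : R)]
    [Unique l] [Unique m] :
    ((weightedSumSquares R fun _ : l ↦ (1 : R)).prod
      (weightedSumSquares R fun _ : m ↦ (-1 : R))).IsometryEquiv (hyperbolicPlane R) where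
  toFun x := (x.1 default + x.2 default, x.1 default - x.2 default)
  invFun u := (fun _ ↦ ⅟2 * (u.1 + u.2), fun _ ↦ ⅟2 * (u.1 - u.2))
  map_add' x y := by
    ext <;> simp only [Prod.fst_add, Pi.add_apply, Prod.snd_add, Prod.mk_add_mk] <;> ring
  map_smul' r x := by
    ext <;>
      simp only [Prod.smul_fst, Pi.smul_apply, smul_eq_mul, Prod.smul_snd, RingHom.id_apply,
        Prod.smul_mk] <;>
      ring
  left_inv x := by
    ext i
    · obtain rfl := Subsingleton.elim i default
      linear_combination x.1 default * invOf_mul_self (2 : R)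
    · obtain rfl := Subsingleton.elim i default
      linear_combination x.2 default * invOf_mul_self (2 : R)
  right_inv u := by
    ext
    · linear_combination u.1 * invOf_mul_self (2 : R)
    · linear_combination u.2 * invOf_mul_self (2 : R)
  map_app' x := by
    simp only [hyperbolicPlane_apply, QuadraticMap.prod_apply, weightedSumSquares_apply,
      Finset.univ_unique, smul_eq_mul, one_mul, Finset.sum_singleton, neg_mul,
      Finset.sum_neg_distrib]
    ring

end QuadraticForms

section Clifford

variable {R V W : Type*} [CommRing R] [AddCommGroup V] [Module R V] [AddCommGroup W] [Module R W]

theorem commute_algHom_of_forall_commute_ι {B : Type*} [Semiring B] [Algebra R B]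
    {Q₀ : QuadraticForm R V} {φ : CliffordAlgebra Q₀ →ₐ[R] B} {b : B}
    (h : ∀ v, Commute b (φ (ι Q₀ v))) (x : CliffordAlgebra Q₀) : Commute b (φ x) := by
  induction x using CliffordAlgebra.induction with
  | algebraMap r => rw [AlgHom.commutes]; exact (Algebra.commutes r b).symm
  | ι v => exact h v
  | mul x y hx hy => rw [map_mul]; exact hx.mul_right hy
  | add x y hx hy => rw [map_add]; exact hx.add_right hy

variable (Q₀ : QuadraticForm R V)

theorem semiconjBy_ι_inl_ι_inr (Q₁ : QuadraticForm R W) (v : V) (w : W) :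
    SemiconjBy (ι (Q₀.prod Q₁) (v, 0)) (ι (Q₀.prod Q₁) (0, w)) (-ι (Q₀.prod Q₁) (0, w)) := by
  rw [SemiconjBy, neg_mul]
  exact ι_mul_ι_comm_of_isOrtho (IsOrtho.inl_inr v w)

/-- The first isotropic basis vector of the hyperbolic plane, in the Clifford algebra of
`Q₀ ⊕ H`. -/
abbrev isotropicFst : CliffordAlgebra (Q₀.prod (hyperbolicPlane R)) :=
  ι _ (0, 1, 0)

/-- The second isotropic basis vector of the hyperbolic plane, in the Clifford algebra of
`Q₀ ⊕ H`. -/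
abbrev isotropicSnd : CliffordAlgebra (Q₀.prod (hyperbolicPlane R)) :=
  ι _ (0, 0, 1)

theorem isHyperbolicPair_isotropic : IsHyperbolicPair (isotropicFst Q₀) (isotropicSnd Q₀) where
  left_sq := by simp [ι_sq_scalar]
  right_sq := by simp [ι_sq_scalar]
  mul_add_mul_swap := by simp [ι_mul_ι_add_swap, polar]

/-- The matrices `diag (v, -v) + !![0, s; t, 0]`, which represent the vectors of `Q₀ ⊕ H`. -/
def vectorMatrix : V × R × R →ₗ[R] Matrix (Fin 2) (Fin 2) (CliffordAlgebra Q₀) where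
  toFun x := !![ι Q₀ x.1, algebraMap R _ x.2.1; algebraMap R _ x.2.2, -ι Q₀ x.1]
  map_add' x y := by
    ext i j
    fin_cases i <;> fin_cases j <;> simp [add_comm]
  map_smul' r x := by
    ext i j
    fin_cases i <;> fin_cases j <;> simp [Algebra.smul_def]

theorem vectorMatrix_apply (v : V) (s t : R) : vectorMatrix Q₀ (v, s, t) =
    !![ι Q₀ v, algebraMap R _ s; algebraMap R _ t, -ι Q₀ v] :=
  rfl

theorem vectorMatrix_mul_self (x : V × R × R) : vectorMatrix Q₀ x * vectorMatrix Q₀ x =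
    algebraMap R _ (Q₀.prod (hyperbolicPlane R) x) := by
  obtain ⟨v, s, t⟩ := x
  ext i j
  fin_cases i <;> fin_cases j <;>
    simp [vectorMatrix_apply, Matrix.algebraMap_matrix_apply, ι_sq_scalar,
      Algebra.algebraMap_eq_smul_one, add_smul, smul_smul, mul_comm, add_comm]

/-- The homomorphism `Cl (Q₀ ⊕ H) → M₂ (Cl Q₀)` extending `vectorMatrix`. -/
def cliffordToMatrix : CliffordAlgebra (Q₀.prod (hyperbolicPlane R)) →ₐ[R]
    Matrix (Fin 2) (Fin 2) (CliffordAlgebra Q₀) :=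
  lift _ ⟨vectorMatrix Q₀, vectorMatrix_mul_self Q₀⟩

theorem cliffordToMatrix_ι (v : V) (s t : R) : cliffordToMatrix Q₀ (ι _ (v, s, t)) =
    !![ι Q₀ v, algebraMap R _ s; algebraMap R _ t, -ι Q₀ v] :=
  lift_ι_apply ..

/-- The embedding `Cl Q₀ → Cl (Q₀ ⊕ H)` sending a vector `v` to `v ⁅a, b⁆`, where `a, b` is the
isotropic basis of `H`. Its image commutes with `a` and `b`. -/
def twistedInl : CliffordAlgebra Q₀ →ₐ[R] CliffordAlgebra (Q₀.prod (hyperbolicPlane R)) :=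
  lift Q₀ ⟨LinearMap.mulRight R ⁅isotropicFst Q₀, isotropicSnd Q₀⁆ ∘ₗ ι _ ∘ₗ LinearMap.inl R V _,
    fun v ↦ ((isHyperbolicPair_isotropic Q₀).mul_lie_mul_self
      (semiconjBy_ι_inl_ι_inr Q₀ _ v _) (semiconjBy_ι_inl_ι_inr Q₀ _ v _)).trans
        (by simp [ι_sq_scalar])⟩

theorem twistedInl_ι (v : V) :
    twistedInl Q₀ (ι Q₀ v) = ι _ (v, 0) * ⁅isotropicFst Q₀, isotropicSnd Q₀⁆ :=
  lift_ι_apply ..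

theorem commute_isotropicFst_twistedInl (x : CliffordAlgebra Q₀) :
    Commute (isotropicFst Q₀) (twistedInl Q₀ x) :=
  commute_algHom_of_forall_commute_ι (fun v ↦ twistedInl_ι Q₀ v ▸
    (commute_mul_of_semiconjBy_neg (semiconjBy_ι_inl_ι_inr Q₀ _ v _)
      (isHyperbolicPair_isotropic Q₀).semiconjBy_lie_left).symm) x

theorem commute_isotropicSnd_twistedInl (x : CliffordAlgebra Q₀) :
    Commute (isotropicSnd Q₀) (twistedInl Q₀ x) :=
  commute_algHom_of_forall_commute_ι (fun v ↦ twistedInl_ι Q₀ v ▸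
    (commute_mul_of_semiconjBy_neg (semiconjBy_ι_inl_ι_inr Q₀ _ v _)
      (isHyperbolicPair_isotropic Q₀).semiconjBy_lie_right).symm) x

/-- The homomorphism `M₂ (Cl Q₀) → Cl (Q₀ ⊕ H)`, inverse to `cliffordToMatrix`. -/
def matrixToClifford : Matrix (Fin 2) (Fin 2) (CliffordAlgebra Q₀) →ₐ[R]
    CliffordAlgebra (Q₀.prod (hyperbolicPlane R)) :=
  (isHyperbolicPair_isotropic Q₀).matrixLift (twistedInl Q₀) (commute_isotropicFst_twistedInl Q₀)
    (commute_isotropicSnd_twistedInl Q₀)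

theorem cliffordToMatrix_isotropicFst : cliffordToMatrix Q₀ (isotropicFst Q₀) = !![0, 1; 0, 0] := by
  simp [cliffordToMatrix_ι]

theorem cliffordToMatrix_isotropicSnd : cliffordToMatrix Q₀ (isotropicSnd Q₀) = !![0, 0; 1, 0] := by
  simp [cliffordToMatrix_ι]

theorem cliffordToMatrix_comp_twistedInl :
    (cliffordToMatrix Q₀).comp (twistedInl Q₀) = Matrix.scalarAlgHom (Fin 2) R := by
  refine hom_ext (LinearMap.ext fun v ↦ ?_)
  ext i j
  fin_cases i <;> fin_cases j <;>
    simp [twistedInl_ι, Ring.lie_def, cliffordToMatrix_ι, Prod.zero_eq_mk]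

theorem cliffordToMatrix_comp_matrixToClifford :
    (cliffordToMatrix Q₀).comp (matrixToClifford Q₀) = AlgHom.id R _ := by
  have cliffordToMatrix_twistedInl (x : CliffordAlgebra Q₀) :
      cliffordToMatrix Q₀ (twistedInl Q₀ x) = Matrix.scalar (Fin 2) x :=
    DFunLike.congr_fun (cliffordToMatrix_comp_twistedInl Q₀) x
  ext X i j
  fin_cases i <;> fin_cases j <;>
    simp [matrixToClifford, IsHyperbolicPair.matrixLift_apply, cliffordToMatrix_twistedInl,
      cliffordToMatrix_isotropicFst, cliffordToMatrix_isotropicSnd]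

theorem matrixToClifford_comp_cliffordToMatrix :
    (matrixToClifford Q₀).comp (cliffordToMatrix Q₀) = AlgHom.id R _ := by
  refine hom_ext (LinearMap.ext fun x ↦ ?_)
  obtain ⟨v, s, t⟩ := x
  let a := isotropicFst Q₀
  let b := isotropicSnd Q₀
  calc matrixToClifford Q₀ (cliffordToMatrix Q₀ (ι _ (v, s, t)))
      = twistedInl Q₀ (ι Q₀ v) * ⁅a, b⁆ + s • a + t • b := by
        rw [cliffordToMatrix_ι, matrixToClifford, IsHyperbolicPair.matrixLift_apply]
        simp only [Matrix.of_apply, Matrix.cons_val_zero, Matrix.cons_val_one,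
          Matrix.cons_val', Matrix.cons_val_fin_one, AlgHom.commutes, ← Algebra.smul_def,
          map_neg, Ring.lie_def, mul_sub, neg_mul, a, b]
        abel
    _ = ι _ (v, 0) + s • a + t • b := by
        rw [twistedInl_ι, mul_assoc, (isHyperbolicPair_isotropic Q₀).lie_mul_self, mul_one]
    _ = ι _ (v, s, t) := by
        simp only [a, b, ← map_smul, ← map_add]
        simp

/-- `Cl (Q₀ ⊕ H) ≃ M₂ (Cl Q₀)`, where `H` is the hyperbolic plane. -/
def prodHyperbolicPlaneEquivMatrix : CliffordAlgebra (Q₀.prod (hyperbolicPlane R)) ≃ₐ[R]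
    Matrix (Fin 2) (Fin 2) (CliffordAlgebra Q₀) :=
  .ofAlgHom (cliffordToMatrix Q₀) (matrixToClifford Q₀)
    (cliffordToMatrix_comp_matrixToClifford Q₀) (matrixToClifford_comp_cliffordToMatrix Q₀)

end Clifford

theorem Q_equivalent_prod (p q : ℕ) :
    (Q p q).Equivalent ((weightedSumSquares ℝ fun _ : Fin p ↦ (1 : ℝ)).prod
      (weightedSumSquares ℝ fun _ : Fin q ↦ (-1 : ℝ))) :=
  ⟨weightedSumSquaresIsometryEquivProd finSumFinEquiv (by simp) (by simp)⟩

theorem Q_succ_succ_equivalent (p q : ℕ) :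
    (Q (p + 1) (q + 1)).Equivalent ((Q p q).prod (hyperbolicPlane ℝ)) :=
  have split_last := (weightedSumSquares_const_succ_equivalent_prod (1 : ℝ) p).prod
    (weightedSumSquares_const_succ_equivalent_prod (-1 : ℝ) q)
  have regroup := IsometryEquiv.prodProdProdComm ..
  (Q_equivalent_prod (p + 1) (q + 1)).trans <| split_last.trans <| .trans ⟨regroup⟩ <|
    (Q_equivalent_prod p q).symm.prod ⟨weightedSumSquaresProdIsometryEquivHyperbolicPlane⟩

theorem G_succ_succ_iso_matrix_general {R V W : Type*} [CommRing R] [AddCommGroup V] [Module R V]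
    [AddCommGroup W] [Module R W] {Q₀ : QuadraticForm R V} {Q₁ : QuadraticForm R W}
    (h : Q₁.Equivalent (Q₀.prod (hyperbolicPlane R))) :
    Nonempty (CliffordAlgebra Q₁ ≃ₐ[R] Matrix (Fin 2) (Fin 2) (CliffordAlgebra Q₀)) :=
  h.map fun e ↦ (equivOfIsometry e).trans (prodHyperbolicPlaneEquivMatrix Q₀)

theorem G_succ_succ_iso_matrix (p q : ℕ) :
    Nonempty (G (p + 1) (q + 1) ≃ₐ[ℝ] Matrix (Fin 2) (Fin 2) (G p q)) :=
  G_succ_succ_iso_matrix_general (Q_succ_succ_equivalent p q)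
end
end

section
/- For all natural numbers p and q, the geometric algebras G_{p+1,q} and G_{q+1,p} are isomorphic as ℝ-algebras. -/
noncomputable section

/-!
The even subalgebra of a Clifford algebra does not change when the form is negated, and
`Cl(F)` is the even subalgebra of `Cl(F ⊕ ⟨-1⟩)`. Since negation turns `(⟨1⟩ ⊕ F) ⊕ ⟨-1⟩` into
`⟨-1⟩ ⊕ -F ⊕ ⟨1⟩`, which is `(⟨1⟩ ⊕ -F) ⊕ ⟨-1⟩` up to a swap of coordinates, the algebras
`Cl(⟨1⟩ ⊕ F)` and `Cl(⟨1⟩ ⊕ -F)` are isomorphic. The theorem is the case `F = Q p q`, whose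
negative is `Q q p` up to a permutation of coordinates.
-/

open QuadraticMap CliffordAlgebra

section EvenSubalgebra

variable {R M₁ M₂ : Type*} [CommRing R] [AddCommGroup M₁] [AddCommGroup M₂] [Module R M₁]
  [Module R M₂] {F₁ : QuadraticForm R M₁} {F₂ : QuadraticForm R M₂}

/-- The homomorphism of even Clifford algebras induced by an isometry; it is the restriction of
`CliffordAlgebra.map`, built here from the universal property of the even subalgebra. -/
def evenMap (f : F₁ →qᵢ F₂) : even F₁ →ₐ[R] even F₂ :=
  even.lift F₁
    { bilin := (even.ι F₂).bilin.compl₁₂ f.toLinearMap f.toLinearMap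
      contract := fun m => by simp [EvenHom.contract]
      contract_mid := fun m₁ m₂ m₃ => by simp [EvenHom.contract_mid] }

@[simp]
theorem evenMap_ι (f : F₁ →qᵢ F₂) (m₁ m₂ : M₁) :
    evenMap f ((even.ι F₁).bilin m₁ m₂) = (even.ι F₂).bilin (f m₁) (f m₂) :=
  even.lift_ι _ _ m₁ m₂

/-- The isomorphism of even Clifford algebras induced by an isometric equivalence. -/
def evenEquivOfIsometry (e : F₁.IsometryEquiv F₂) : even F₁ ≃ₐ[R] even F₂ :=
  AlgEquiv.ofAlgHom (evenMap e.toIsometry) (evenMap e.symm.toIsometry)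
    (by ext m₁ m₂ : 4; simp)
    (by ext m₁ m₂ : 4; simp)

/-- The isomorphism `Cl(F₁) ≃ Cl(F₂)` coming from an isometry `-(F₁ ⊕ ⟨-1⟩) ≃ F₂ ⊕ ⟨-1⟩`, through
the identification of `Cl(Fᵢ)` with the even subalgebra of `Cl(Fᵢ ⊕ ⟨-1⟩)`. -/
def equivOfNegProdNegSqIsometry
    (e : (-F₁.prod (-sq (R := R))).IsometryEquiv (F₂.prod (-sq (R := R)))) :
    CliffordAlgebra F₁ ≃ₐ[R] CliffordAlgebra F₂ :=
  (equivEven F₁).trans <| (evenEquivEvenNeg _).trans <|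
    (evenEquivOfIsometry e).trans (equivEven F₂).symm

end EvenSubalgebra

section SqProd

variable {R M : Type*} [CommRing R] [AddCommGroup M] [Module R M]

/-- The isometry from `-((⟨1⟩ ⊕ F) ⊕ ⟨-1⟩)` to `(⟨1⟩ ⊕ -F) ⊕ ⟨-1⟩` that exchanges the two
coordinates in `R`. -/
def negSqProdProdNegSqIsometry (F : QuadraticForm R M) :
    (-((sq (R := R)).prod F).prod (-sq (R := R))).IsometryEquiv
      (((sq (R := R)).prod (-F)).prod (-sq (R := R))) where
  toFun x := ((x.2, x.1.2), x.1.1)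
  invFun x := ((x.2, x.1.2), x.1.1)
  map_add' _ _ := rfl
  map_smul' _ _ := rfl
  map_app' x := by
    simp [add_comm, add_left_comm]

/-- The isomorphism `Cl(⟨1⟩ ⊕ F) ≃ Cl(⟨1⟩ ⊕ -F)`: negating the form on the orthogonal complement of
a vector of square one does not change the Clifford algebra. -/
def sqProdEquivSqProdNeg (F : QuadraticForm R M) :
    CliffordAlgebra ((sq (R := R)).prod F) ≃ₐ[R] CliffordAlgebra ((sq (R := R)).prod (-F)) :=
  equivOfNegProdNegSqIsometry (negSqProdProdNegSqIsometry F)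

end SqProd

section WeightedSumSquares

variable {ι κ R S : Type*} [Fintype ι] [Fintype κ]

theorem weightedSumSquares_comp_equivalent [CommSemiring R] [Monoid S] [DistribMulAction S R]
    [SMulCommClass S R R] (w : κ → S) (e : ι ≃ κ) :
    (weightedSumSquares R (w ∘ e)).Equivalent (weightedSumSquares R w) :=
  ⟨{ LinearEquiv.funCongrLeft R R e.symm with
      map_app' := fun x => by
        simp [weightedSumSquares_apply, ← e.sum_comp, LinearEquiv.funCongrLeft_apply,
          LinearMap.funLeft_apply] }⟩

theorem weightedSumSquares_equivalent_smul_sq_prod [CommSemiring R] [Monoid S]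
    [DistribMulAction S R] [SMulCommClass S R R] {n : ℕ} (w : Fin (n + 1) → S) :
    (weightedSumSquares R w).Equivalent
      ((w 0 • sq (R := R)).prod (weightedSumSquares R (w ∘ Fin.succ))) :=
  ⟨{ (Fin.consLinearEquiv R fun _ => R).symm with
      map_app' := fun x => by
        simp [weightedSumSquares_apply, Fin.sum_univ_succ, Fin.tail] }⟩

theorem weightedSumSquares_neg [CommRing R] [Ring S] [Module S R] [SMulCommClass S R R]
    (w : ι → S) : weightedSumSquares R (-w) = -weightedSumSquares R w := by
  ext x
  simp [weightedSumSquares_apply]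

end WeightedSumSquares

/-- The diagonal weights of `Q p q`: `p` ones followed by `q` minus ones. -/
def signatureWeight (p q : ℕ) (i : Fin (p + q)) : ℝ :=
  if (i : ℕ) < p then 1 else -1

theorem Q_eq_weightedSumSquares (p q : ℕ) : Q p q = weightedSumSquares ℝ (signatureWeight p q) :=
  rfl

theorem signatureWeight_comp_finAddFlip (p q : ℕ) :
    signatureWeight p q ∘ finAddFlip = -signatureWeight q p := by
  ext i
  induction i using Fin.addCases <;> simp [signatureWeight]

theorem Q_equivalent_neg_swap (p q : ℕ) : (Q p q).Equivalent (-Q q p) := by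
  rw [Q_eq_weightedSumSquares, Q_eq_weightedSumSquares, ← weightedSumSquares_neg,
    ← signatureWeight_comp_finAddFlip]
  exact (weightedSumSquares_comp_equivalent _ _).symm

theorem Q_succ_equivalent_sq_prod (p q : ℕ) : (Q (p + 1) q).Equivalent (sq.prod (Q p q)) := by
  let w : Fin (p + q + 1) → ℝ := signatureWeight (p + 1) q ∘ finCongr (Nat.add_right_comm p q 1)
  have w_zero : w 0 = 1 := by simp [w, signatureWeight]
  have w_succ : w ∘ Fin.succ = signatureWeight p q := by
    ext i
    simp [w, signatureWeight]
  have reindex : (Q (p + 1) q).Equivalent (weightedSumSquares ℝ w) :=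
    (weightedSumSquares_comp_equivalent _ _).symm
  have split_zero := weightedSumSquares_equivalent_smul_sq_prod (R := ℝ) w
  rw [w_zero, one_smul, w_succ] at split_zero
  exact reindex.trans split_zero

theorem G_p1q_iso_G_q1p (p q : ℕ) :
    Nonempty (G (p + 1) q ≃ₐ[ℝ] G (q + 1) p) := by
  obtain ⟨toSqProd⟩ := Q_succ_equivalent_sq_prod p q
  obtain ⟨toSqProdNeg⟩ : (Q (q + 1) p).Equivalent (sq.prod (-Q p q)) :=
    (Q_succ_equivalent_sq_prod q p).trans (.prod (.refl _) (Q_equivalent_neg_swap q p))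
  exact ⟨(equivOfIsometry toSqProd).trans <| (sqProdEquivSqProdNeg (Q p q)).trans
    (equivOfIsometry toSqProdNeg).symm⟩
end
end

section
/- Let p, q be natural numbers with p − q ≡ 1 (mod 4) (as integers). Then for every natural number k, the geometric algebras G_{p+k,q} and G_{p,q+k} are isomorphic as ℝ-algebras. -/
noncomputable section

/-!
Let `ω` be the product of the `n = p + q` generators of `G_{p,q}`. If `p - q ≡ 1 (mod 4)`, then `n`
is odd, so `ω` is odd and central, and `ω² = (-1) ^ (n (n - 1) / 2 + q) = 1`. In the Clifford
algebra of `Q_{p,q} ⊕ Q'`, the element `ω` therefore anticommutes with every vector `w` of the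
second summand, so that `(ω w)² = -w²`, while `ω w` still anticommutes with the first summand.
Replacing each such `w` by `ω w` exchanges `Q'` with `-Q'`, and doing it twice is the identity
because `ω² = 1`.
-/

open CliffordAlgebra QuadraticMap

section OrthogonalProducts

variable {R M : Type*} [CommRing R] [AddCommGroup M] [Module R M] {Q₁ : QuadraticForm R M}

theorem prod_map_ι_mul_ι_of_forall_isOrtho {v : M} {l : List M} (hv : ∀ a ∈ l, Q₁.IsOrtho a v) :
    (l.map (ι Q₁)).prod * ι Q₁ v = (-1 : R) ^ l.length • (ι Q₁ v * (l.map (ι Q₁)).prod) := by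
  induction l with
  | nil => simp
  | cons a l ih =>
    obtain ⟨hav, hlv⟩ := List.forall_mem_cons.mp hv
    rw [List.map_cons, List.prod_cons, mul_assoc, ih hlv, mul_smul_comm,
      ι_mul_ι_mul_of_isOrtho _ hav, List.length_cons, pow_succ, mul_neg_one, neg_smul, smul_neg]

theorem prod_map_ι_mul_ι_of_mem {v : M} {l : List M} (hl : l.Pairwise Q₁.IsOrtho) (hv : v ∈ l) :
    (l.map (ι Q₁)).prod * ι Q₁ v = (-1 : R) ^ (l.length + 1) • (ι Q₁ v * (l.map (ι Q₁)).prod) := by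
  induction l with
  | nil => simp at hv
  | cons a l ih =>
    obtain ⟨hal, hl⟩ := List.pairwise_cons.mp hl
    rw [List.map_cons, List.prod_cons, mul_assoc, List.length_cons]
    rcases List.mem_cons.mp hv with rfl | hvl
    · have hlv : ∀ a ∈ l, Q₁.IsOrtho a v := fun a ha => (hal a ha).symm
      rw [prod_map_ι_mul_ι_of_forall_isOrtho hlv, mul_smul_comm, pow_succ _ (l.length + 1),
        pow_succ, mul_neg_one, mul_neg_one, neg_neg]
    · rw [ih hl hvl, mul_smul_comm, ι_mul_ι_mul_of_isOrtho _ (hal v hvl), pow_succ _ (l.length + 1),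
        mul_neg_one, neg_smul, smul_neg]

theorem prod_map_ι_mul_self {l : List M} (hl : l.Pairwise Q₁.IsOrtho) :
    (l.map (ι Q₁)).prod * (l.map (ι Q₁)).prod =
      algebraMap R _ ((-1) ^ l.length.choose 2 * (l.map Q₁).prod) := by
  induction l with
  | nil => simp
  | cons a l ih =>
    obtain ⟨hal, hl⟩ := List.pairwise_cons.mp hl
    have hla : ∀ b ∈ l, Q₁.IsOrtho b a := fun b hb => (hal b hb).symm
    simp only [List.map_cons, List.prod_cons, List.length_cons]
    set P := (l.map (ι Q₁)).prod
    calc ι Q₁ a * P * (ι Q₁ a * P)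
        = ι Q₁ a * (P * ι Q₁ a) * P := by simp only [mul_assoc]
      _ = (-1 : R) ^ l.length • (ι Q₁ a * ι Q₁ a * (P * P)) := by
        rw [prod_map_ι_mul_ι_of_forall_isOrtho hla, mul_smul_comm, smul_mul_assoc]
        simp only [P, mul_assoc]
      _ = algebraMap R _ ((-1) ^ (l.length + 1).choose 2 * (Q₁ a * (l.map Q₁).prod)) := by
        rw [ι_sq_scalar, ih hl, ← map_mul, Algebra.smul_def, ← map_mul, Nat.choose_succ_succ' _ 1,
          Nat.choose_one_right, pow_add]
        ring_nf

theorem prod_map_ι_mem_evenOdd (l : List M) :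
    (l.map (ι Q₁)).prod ∈ evenOdd Q₁ (l.length : ZMod 2) := by
  have hmem := SetLike.list_prod_map_mem_graded (A := evenOdd Q₁) l (fun _ => 1) (ι Q₁)
    fun v _ => ι_mem_evenOdd_one Q₁ v
  simpa using hmem

end OrthogonalProducts

/-- An odd central element `ω` of a Clifford algebra with `ω² = 1`. Multiplication by it is what
exchanges a complementary orthogonal summand with its negative. Centrality is only required against
the vectors, which generate the algebra. -/
structure IsOddCentralInvolution {R M : Type*} [CommRing R] [AddCommGroup M] [Module R M]
    (Q₁ : QuadraticForm R M) (ω : CliffordAlgebra Q₁) : Prop where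
  mul_self : ω * ω = 1
  mem_evenOdd_one : ω ∈ evenOdd Q₁ 1
  commute_ι : ∀ v, Commute (ι Q₁ v) ω

theorem isOddCentralInvolution_prod_map_ι {R M : Type*} [CommRing R] [AddCommGroup M] [Module R M]
    {Q₁ : QuadraticForm R M} {l : List M} (hl : l.Pairwise Q₁.IsOrtho)
    (hspan : Submodule.span R {v | v ∈ l} = ⊤) (hodd : Odd l.length)
    (hdisc : (-1) ^ l.length.choose 2 * (l.map Q₁).prod = 1) :
    IsOddCentralInvolution Q₁ (l.map (ι Q₁)).prod where
  mul_self := by rw [prod_map_ι_mul_self hl, hdisc, map_one]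
  mem_evenOdd_one := by
    simpa only [ZMod.natCast_eq_one_iff_odd.mpr hodd] using prod_map_ι_mem_evenOdd (Q₁ := Q₁) l
  commute_ι v := by
    have hv : v ∈ Submodule.span R {v | v ∈ l} := hspan ▸ Submodule.mem_top
    induction hv using Submodule.span_induction with
    | mem v hv =>
      have hcomm := prod_map_ι_mul_ι_of_mem hl hv
      rw [hodd.add_one.neg_one_pow, one_smul] at hcomm
      exact hcomm.symm
    | zero => simp
    | add x y _ _ hx hy => simpa using hx.add_left hy
    | smul c x _ hx => simpa using hx.smul_left c

theorem add_mul_mul_self_of_anticommute {A : Type*} [Ring A] {a b c : A} (hab : a * b = -(b * a))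
    (hac : Commute a c) (hcb : c * b = -(b * c)) (hc : c * c = 1) :
    (a + c * b) * (a + c * b) = a * a - b * b := by
  have hcross : a * (c * b) = -(c * b * a) := by
    rw [← mul_assoc, hac.eq, mul_assoc, hab, mul_neg, mul_assoc]
  have hsq : c * b * (c * b) = -(b * b) := by
    calc c * b * (c * b) = -(b * c) * (c * b) := by rw [← hcb]
      _ = -(b * (c * c) * b) := by simp only [neg_mul, mul_assoc]
      _ = -(b * b) := by rw [hc, mul_one]
  rw [add_mul, mul_add, mul_add, hcross, hsq]
  abel

namespace IsOddCentralInvolution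

variable {R M₁ M₂ : Type*} [CommRing R] [AddCommGroup M₁] [Module R M₁] [AddCommGroup M₂]
  [Module R M₂] {Q₁ : QuadraticForm R M₁} {Q₂ Q₃ : QuadraticForm R M₂} {ω : CliffordAlgebra Q₁}

/-- The linear map `(v, w) ↦ v + ω w` from `M₁ × M₂` into the Clifford algebra of `Q₁ ⊕ Q₂`. -/
def twistVector (Q₂ : QuadraticForm R M₂) (ω : CliffordAlgebra Q₁) :
    M₁ × M₂ →ₗ[R] CliffordAlgebra (Q₁.prod Q₂) :=
  (ι (Q₁.prod Q₂) ∘ₗ LinearMap.inl R M₁ M₂).coprod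
    (LinearMap.mulLeft R (map (.inl Q₁ Q₂) ω) ∘ₗ ι (Q₁.prod Q₂) ∘ₗ LinearMap.inr R M₁ M₂)

theorem twistVector_apply (Q₂ : QuadraticForm R M₂) (ω : CliffordAlgebra Q₁) (m : M₁ × M₂) :
    twistVector Q₂ ω m =
      ι (Q₁.prod Q₂) (m.1, 0) + map (.inl Q₁ Q₂) ω * ι (Q₁.prod Q₂) (0, m.2) :=
  rfl

theorem twistVector_mul_self (hω : IsOddCentralInvolution Q₁ ω) (hQ : Q₃ = -Q₂) (m : M₁ × M₂) :
    twistVector Q₂ ω m * twistVector Q₂ ω m = algebraMap R _ (Q₁.prod Q₃ m) := by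
  obtain ⟨v, w⟩ := m
  have hvw : ι (Q₁.prod Q₂) (v, 0) * ι (Q₁.prod Q₂) (0, w) =
      -(ι (Q₁.prod Q₂) (0, w) * ι (Q₁.prod Q₂) (v, 0)) :=
    ι_mul_ι_comm_of_isOrtho (IsOrtho.inl_inr v w)
  have hvω : Commute (ι (Q₁.prod Q₂) (v, 0)) (map (.inl Q₁ Q₂) ω) := by
    simpa using (hω.commute_ι v).map (map (.inl Q₁ Q₂))
  have hωw : map (.inl Q₁ Q₂) ω * ι (Q₁.prod Q₂) (0, w) =
      -(ι (Q₁.prod Q₂) (0, w) * map (.inl Q₁ Q₂) ω) := by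
    simpa using map_mul_map_eq_neg_of_isOrtho_of_mem_evenOdd_one (.inl Q₁ Q₂) (.inr Q₁ Q₂)
      IsOrtho.inl_inr ω (ι Q₂ w) hω.mem_evenOdd_one (ι_mem_evenOdd_one Q₂ w)
  have hωω : map (.inl Q₁ Q₂) ω * map (.inl Q₁ Q₂) ω = 1 := by
    rw [← map_mul, hω.mul_self, map_one]
  rw [twistVector_apply, add_mul_mul_self_of_anticommute hvw hvω hωw hωω, ι_sq_scalar, ι_sq_scalar,
    ← map_sub, hQ]
  simp [sub_eq_add_neg]

/-- The algebra map between the Clifford algebras of `Q₁ ⊕ Q₃` and `Q₁ ⊕ Q₂`, where `Q₃ = -Q₂`,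
that fixes the vectors of the first summand and sends each vector `w` of the second one to `ω w`.
The two forms are related by an equation so that the map in the other direction is again an instance
of this definition. -/
def twistHom (hω : IsOddCentralInvolution Q₁ ω) (hQ : Q₃ = -Q₂) :
    CliffordAlgebra (Q₁.prod Q₃) →ₐ[R] CliffordAlgebra (Q₁.prod Q₂) :=
  lift (Q₁.prod Q₃) ⟨twistVector Q₂ ω, hω.twistVector_mul_self hQ⟩

theorem twistHom_ι_inl (hω : IsOddCentralInvolution Q₁ ω) (hQ : Q₃ = -Q₂) (v : M₁) :
    hω.twistHom hQ (ι _ (v, 0)) = ι _ (v, 0) := by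
  simp [twistHom, twistVector_apply, ← Prod.zero_eq_mk]

theorem twistHom_ι_inr (hω : IsOddCentralInvolution Q₁ ω) (hQ : Q₃ = -Q₂) (w : M₂) :
    hω.twistHom hQ (ι _ (0, w)) = map (.inl Q₁ Q₂) ω * ι _ (0, w) := by
  simp [twistHom, twistVector_apply, ← Prod.zero_eq_mk]

theorem twistHom_map_inl (hω : IsOddCentralInvolution Q₁ ω) (hQ : Q₃ = -Q₂)
    (x : CliffordAlgebra Q₁) :
    hω.twistHom hQ (map (.inl Q₁ Q₃) x) = map (.inl Q₁ Q₂) x := by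
  have hcomp : (hω.twistHom hQ).comp (map (.inl Q₁ Q₃)) = map (.inl Q₁ Q₂) := by
    ext v
    simp [twistHom_ι_inl]
  exact DFunLike.congr_fun hcomp x

theorem twistHom_comp_twistHom (hω : IsOddCentralInvolution Q₁ ω) (hQ : Q₃ = -Q₂)
    (hQ' : Q₂ = -Q₃) : (hω.twistHom hQ).comp (hω.twistHom hQ') = AlgHom.id R _ := by
  ext x
  · simp [twistHom_ι_inl]
  · simp only [LinearMap.comp_apply, AlgHom.toLinearMap_apply, LinearMap.inr_apply,
      AlgHom.comp_apply, twistHom_ι_inr, map_mul, twistHom_map_inl, AlgHom.id_apply]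
    rw [← mul_assoc, ← map_mul, hω.mul_self, map_one, one_mul]

/-- An odd central involution of the Clifford algebra of `Q₁` identifies the Clifford algebras of
`Q₁ ⊕ Q₂` and `Q₁ ⊕ -Q₂`. -/
def prodNegEquiv (hω : IsOddCentralInvolution Q₁ ω) (Q₂ : QuadraticForm R M₂) :
    CliffordAlgebra (Q₁.prod Q₂) ≃ₐ[R] CliffordAlgebra (Q₁.prod (-Q₂)) :=
  AlgEquiv.ofAlgHom (hω.twistHom (neg_neg Q₂).symm) (hω.twistHom rfl)
    (hω.twistHom_comp_twistHom _ _) (hω.twistHom_comp_twistHom _ _)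

end IsOddCentralInvolution

section WeightedSumSquares

variable {R α β γ : Type*} [CommRing R] [Fintype α] [Fintype β] [Fintype γ]

theorem weightedSumSquares_neg_s5 (w : α → R) :
    weightedSumSquares R (-w) = -weightedSumSquares R w := by
  ext x
  simp

theorem weightedSumSquares_single [DecidableEq α] (w : α → R) (i : α) :
    weightedSumSquares R w (Pi.single i 1) = w i := by
  simp [Pi.single_apply]

theorem weightedSumSquares_isOrtho_single [DecidableEq α] (w : α → R) {i j : α} (hij : i ≠ j)
    (a b : R) : (weightedSumSquares R w).IsOrtho (Pi.single i a) (Pi.single j b) := by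
  rw [isOrtho_def]
  simp only [weightedSumSquares_apply, ← Finset.sum_add_distrib, ← smul_add]
  refine Finset.sum_congr rfl fun x _ => ?_
  have hdisj : (Pi.single i a : α → R) x * (Pi.single j b : α → R) x = 0 := by
    rcases eq_or_ne x i with rfl | hx <;> simp [*]
  congr 1
  simp only [Pi.add_apply]
  linear_combination 2 * hdisj

theorem weightedSumSquares_equivalent_prod (e : α ⊕ β ≃ γ) {u : α → R} {v : β → R} {w : γ → R}
    (hu : ∀ i, w (e (.inl i)) = u i) (hv : ∀ j, w (e (.inr j)) = v j) :
    (weightedSumSquares R w).Equivalent ((weightedSumSquares R u).prod (weightedSumSquares R v)) :=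
  ⟨{ (LinearEquiv.funCongrLeft R R e).trans (LinearEquiv.sumArrowLequivProdArrow α β R R) with
    map_app' := fun x => by
      simp [← e.sum_comp, hu, hv, LinearEquiv.funCongrLeft_apply] }⟩

theorem exists_isOddCentralInvolution_weightedSumSquares {n : ℕ} (hn : Odd n) {w : Fin n → R}
    (hw : (-1) ^ n.choose 2 * ∏ i, w i = 1) :
    ∃ ω, IsOddCentralInvolution (weightedSumSquares R w) ω := by
  set l := List.ofFn fun i : Fin n => (Pi.single i 1 : Fin n → R) with hl
  have hortho : l.Pairwise (weightedSumSquares R w).IsOrtho :=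
    List.pairwise_ofFn.mpr fun i j hij => weightedSumSquares_isOrtho_single w hij.ne 1 1
  have hspan : Submodule.span R {v | v ∈ l} = ⊤ := by
    simpa [hl, List.mem_ofFn, Set.range] using (Pi.basisFun R (Fin n)).span_eq
  have hdisc : (-1) ^ l.length.choose 2 * (l.map (weightedSumSquares R w)).prod = 1 := by
    rw [hl, List.length_ofFn, List.map_ofFn, List.prod_ofFn]
    simpa only [Function.comp_apply, weightedSumSquares_single] using hw
  exact ⟨_, isOddCentralInvolution_prod_map_ι hortho hspan (by simpa [hl] using hn) hdisc⟩

end WeightedSumSquares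

section SignatureForm

variable (R : Type*) [CommRing R]

/-- The diagonal form with `p` coefficients `1` followed by `q` coefficients `-1` over an arbitrary
commutative ring; over `ℝ` it is `Q p q`. -/
def signatureForm (p q : ℕ) : QuadraticForm R (Fin (p + q) → R) :=
  weightedSumSquares R fun i : Fin (p + q) => if (i : ℕ) < p then (1 : R) else -1

theorem signatureForm_add_left_equivalent (k p q : ℕ) :
    (signatureForm R (k + p) q).Equivalent
      ((weightedSumSquares R (1 : Fin k → R)).prod (signatureForm R p q)) :=
  weightedSumSquares_equivalent_prod
    (finSumFinEquiv.trans (finCongr (Nat.add_assoc k p q).symm))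
    (fun i => by simp [i.isLt.trans_le (Nat.le_add_right k p)]) (fun j => by simp)

theorem signatureForm_add_right_equivalent (p q k : ℕ) :
    (signatureForm R p (q + k)).Equivalent
      ((signatureForm R p q).prod (weightedSumSquares R (-1 : Fin k → R))) :=
  weightedSumSquares_equivalent_prod (finSumFinEquiv.trans (finCongr (Nat.add_assoc p q k)))
    (fun i => by simp) (fun j => by simp [Nat.add_assoc])

theorem even_choose_two_add_of_sub_modEq_one {p q : ℕ} (h : (p : ℤ) - q ≡ 1 [ZMOD 4]) :
    Even ((p + q).choose 2 + q) := by
  obtain ⟨m, hm⟩ : ∃ m, p + q = 2 * m + 1 := ⟨(p + q) / 2, by rw [Int.ModEq] at h; omega⟩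
  have hmq : Even (m + q) := by rw [Int.ModEq] at h; rw [Nat.even_iff]; omega
  have hchoose : (p + q).choose 2 = (2 * m + 1) * m := by
    rw [hm, Nat.choose_two_right, Nat.add_sub_cancel, mul_left_comm,
      Nat.mul_div_cancel_left _ two_pos]
  rw [hchoose, show (2 * m + 1) * m + q = 2 * (m * m) + (m + q) by ring]
  exact (even_two_mul _).add hmq

theorem exists_isOddCentralInvolution_signatureForm {p q : ℕ} (h : (p : ℤ) - q ≡ 1 [ZMOD 4]) :
    ∃ ω, IsOddCentralInvolution (signatureForm R p q) ω := by
  have hodd : Odd (p + q) := by rw [Int.ModEq] at h; rw [Nat.odd_iff]; omega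
  refine exists_isOddCentralInvolution_weightedSumSquares hodd ?_
  have hdisc : ∏ i : Fin (p + q), (if (i : ℕ) < p then (1 : R) else -1) = (-1) ^ q := by
    simp [Fin.prod_univ_add]
  rw [hdisc, ← pow_add, (even_choose_two_add_of_sub_modEq_one h).neg_one_pow]

theorem G_pkq_iso_G_pqk_general (p q : ℕ) (h : (p : ℤ) - q ≡ 1 [ZMOD 4]) (k : ℕ) :
    Nonempty (CliffordAlgebra (signatureForm R (p + k) q) ≃ₐ[R]
      CliffordAlgebra (signatureForm R p (q + k))) := by
  obtain ⟨ω, hω⟩ := exists_isOddCentralInvolution_signatureForm R h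
  obtain ⟨eleft⟩ : (signatureForm R (p + k) q).Equivalent
      ((signatureForm R p q).prod (weightedSumSquares R (1 : Fin k → R))) := by
    rw [Nat.add_comm p k]
    exact (signatureForm_add_left_equivalent R k p q).trans ⟨IsometryEquiv.prodComm _ _⟩
  obtain ⟨eright⟩ := signatureForm_add_right_equivalent R p q k
  rw [weightedSumSquares_neg_s5] at eright
  exact ⟨(equivOfIsometry eleft).trans
    ((hω.prodNegEquiv _).trans (equivOfIsometry eright).symm)⟩

end SignatureForm

theorem G_pkq_iso_G_pqk (p q : ℕ) (h : ((p : ℤ) - q) ≡ 1 [ZMOD 4]) (k : ℕ) :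
    Nonempty (G (p + k) q ≃ₐ[ℝ] G p (q + k)) :=
  G_pkq_iso_G_pqk_general ℝ p q h k
end
end

section
/- (Cartan–Bott periodicity) For all natural numbers p and q, the geometric algebra G_{p+8,q} is isomorphic as an ℝ-algebra to the algebra of 16×16 matrices with entries in G_{p,q}: G_{p+8,q} ≃ₐ[ℝ] Matrix (Fin 16) (Fin 16) G_{p,q}. -/
noncomputable section

/-!
Suppose `Cl Q₂` contains an even element `ω` that anticommutes with every vector and squares to a
unit `c`. Multiplying the vectors of `Q₁` by `ω` makes them commute with those of `Q₂`, at the price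
of scaling `Q₁` by `c`, so that `Cl (Q₁ ⊥ Q₂) ≅ Cl (c Q₁) ⊗ Cl Q₂`. A plane `⟨a, b⟩` has such an
element with `c = -ab`.

* For the hyperbolic plane `⟨1, -1⟩` this gives `Cl (Q ⊥ ⟨1, -1⟩) ≅ M₂(Cl Q)`.
* For `P = ⟨1, 1⟩`, applying it twice gives `Cl (Q ⊥ P ⊥ P) ≅ Cl Q ⊗ Cl (-P) ⊗ Cl P`. The right-hand
  side is symmetric in `P` and `-P`, hence `Cl (Q ⊥ P ⊥ P) ≅ Cl (Q ⊥ -P ⊥ -P)`.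

Now trade two of the four planes in `Q ⊥ P ⊥ P ⊥ P ⊥ P` for their negatives and regroup: each
`P ⊥ -P` is a sum of two hyperbolic planes, so `Cl` becomes `M₄(M₄(Cl Q))`.
-/

namespace BottPeriodicity

open CliffordAlgebra QuadraticMap
open scoped TensorProduct Quaternion

section Isometries

variable {R M₁ M₂ M₃ N : Type*} [CommSemiring R] [AddCommMonoid M₁] [AddCommMonoid M₂]
  [AddCommMonoid M₃] [AddCommMonoid N] [Module R M₁] [Module R M₂] [Module R M₃] [Module R N]

/-- Associativity of orthogonal sums. -/
def prodAssoc (Q₁ : QuadraticMap R M₁ N) (Q₂ : QuadraticMap R M₂ N) (Q₃ : QuadraticMap R M₃ N) :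
    ((Q₁.prod Q₂).prod Q₃).IsometryEquiv (Q₁.prod (Q₂.prod Q₃)) where
  toLinearEquiv := LinearEquiv.prodAssoc R M₁ M₂ M₃
  map_app' x := by simp [add_assoc]

/-- Exchange of the last two summands of an orthogonal sum. -/
def prodRightComm (Q₁ : QuadraticMap R M₁ N) (Q₂ : QuadraticMap R M₂ N)
    (Q₃ : QuadraticMap R M₃ N) :
    ((Q₁.prod Q₂).prod Q₃).IsometryEquiv ((Q₁.prod Q₃).prod Q₂) :=
  (prodAssoc Q₁ Q₂ Q₃).trans <|
    (IsometryEquiv.prod (.refl Q₁) (.prodComm Q₂ Q₃)).trans (prodAssoc Q₁ Q₃ Q₂).symm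

end Isometries

section Matrices

/-- Square matrices of square matrices are square matrices. -/
def matrixMatrixEquiv (R A : Type*) [CommSemiring R] [Semiring A] [Algebra R A] (m n : ℕ) :
    Matrix (Fin m) (Fin m) (Matrix (Fin n) (Fin n) A) ≃ₐ[R]
      Matrix (Fin (m * n)) (Fin (m * n)) A :=
  (Matrix.compAlgEquiv (Fin m) (Fin n) A R).trans (Matrix.reindexAlgEquiv R A finProdFinEquiv)

/-- The split quaternions are the `2 × 2` matrices, with `i` acting as `diag(1, -1)` and `j` as a
quarter turn. -/
def splitQuaternionEquiv (R : Type*) [CommRing R] [Invertible (2 : R)] :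
    ℍ[R,1,0,-1] ≃ₐ[R] Matrix (Fin 2) (Fin 2) R where
  toFun x := !![x.re + x.imI, -x.imJ - x.imK; x.imJ - x.imK, x.re - x.imI]
  invFun A := ⟨⅟2 * (A 0 0 + A 1 1), ⅟2 * (A 0 0 - A 1 1), ⅟2 * (A 1 0 - A 0 1),
    -⅟2 * (A 0 1 + A 1 0)⟩
  left_inv x := by
    ext <;> simp only [Matrix.of_apply, Matrix.cons_val] <;> grind [invOf_mul_self (2 : R)]
  right_inv A := by
    refine Eq.trans ?_ A.eta_fin_two.symm
    grind [invOf_mul_self (2 : R)]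
  map_add' x y := by
    simp only [QuaternionAlgebra.re_add, QuaternionAlgebra.imI_add, QuaternionAlgebra.imJ_add,
      QuaternionAlgebra.imK_add, Matrix.of_add_of, Matrix.add_cons, Matrix.head_cons,
      Matrix.tail_cons, Matrix.empty_add_empty]
    ring_nf
  map_mul' x y := by
    simp only [QuaternionAlgebra.re_mul, QuaternionAlgebra.imI_mul, QuaternionAlgebra.imJ_mul,
      QuaternionAlgebra.imK_mul, Matrix.mul_fin_two]
    ring_nf
  commutes' r := by
    simp [Matrix.algebraMap_eq_diagonal, Matrix.diagonal_fin_two]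

end Matrices

variable {R : Type*} [CommRing R]

section Pseudoscalar

variable {M₁ M₂ : Type*} [AddCommGroup M₁] [Module R M₁] [AddCommGroup M₂] [Module R M₂]
variable {Q₁ Q₁' : QuadraticForm R M₁} {Q₂ : QuadraticForm R M₂}
variable {c : Rˣ} {ω : CliffordAlgebra Q₂}

/-- An even element of a Clifford algebra that squares to the unit `c` and anticommutes with all
vectors, like the product of the vectors of an orthogonal basis of even size. -/
structure IsPseudoscalar (Q₂ : QuadraticForm R M₂) (c : Rˣ) (ω : CliffordAlgebra Q₂) : Prop where
  mem_evenOdd_zero : ω ∈ evenOdd Q₂ 0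
  mul_self : ω * ω = algebraMap R _ c
  mul_ι : ∀ m, ω * ι Q₂ m = -(ι Q₂ m * ω)

theorem commute_of_commute_ι {A : Type*} [Ring A] [Algebra R A] (f : CliffordAlgebra Q₁ →ₐ[R] A)
    (g : CliffordAlgebra Q₂ →ₐ[R] A) (h : ∀ m₁ m₂, Commute (f (ι Q₁ m₁)) (g (ι Q₂ m₂)))
    (x : CliffordAlgebra Q₁) (y : CliffordAlgebra Q₂) : Commute (f x) (g y) := by
  induction x using CliffordAlgebra.induction with
  | algebraMap r => exact f.commutes r ▸ Algebra.commute_algebraMap_left r _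
  | ι m₁ =>
    induction y using CliffordAlgebra.induction with
    | algebraMap r => exact g.commutes r ▸ Algebra.commute_algebraMap_right r _
    | ι m₂ => exact h m₁ m₂
    | mul _ _ hx hy => exact map_mul g _ _ ▸ hx.mul_right hy
    | add _ _ hx hy => exact map_add g _ _ ▸ hx.add_right hy
  | mul _ _ hx hy => exact map_mul f _ _ ▸ hx.mul_left hy
  | add _ _ hx hy => exact map_add f _ _ ▸ hx.add_left hy

theorem isPseudoscalar_ι_mul_ι (b : Module.Basis (Fin 2) R M₂) (hb : Q₂.IsOrtho (b 0) (b 1))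
    (hc : Q₂ (b 0) * Q₂ (b 1) = -c) : IsPseudoscalar Q₂ c (ι Q₂ (b 0) * ι Q₂ (b 1)) where
  mem_evenOdd_zero := ι_mul_ι_mem_evenOdd_zero Q₂ _ _
  mul_self := by
    calc ι Q₂ (b 0) * ι Q₂ (b 1) * (ι Q₂ (b 0) * ι Q₂ (b 1))
      _ = -(ι Q₂ (b 0) * ι Q₂ (b 0) * (ι Q₂ (b 1) * ι Q₂ (b 1))) := by
        simp only [mul_assoc, ι_mul_ι_mul_of_isOrtho _ hb.symm, mul_neg]
      _ = algebraMap R _ c := by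
        rw [ι_sq_scalar, ι_sq_scalar, ← map_mul, hc, map_neg, neg_neg]
  mul_ι m := by
    suffices LinearMap.mulLeft R (ι Q₂ (b 0) * ι Q₂ (b 1)) ∘ₗ ι Q₂ =
        -(LinearMap.mulRight R (ι Q₂ (b 0) * ι Q₂ (b 1)) ∘ₗ ι Q₂) from LinearMap.congr_fun this m
    refine b.ext fun i => ?_
    fin_cases i
    · simp [ι_mul_ι_comm_of_isOrtho hb.symm, ← mul_assoc]
    · simp [mul_assoc, ι_mul_ι_mul_of_isOrtho _ hb.symm]

namespace IsPseudoscalar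

theorem commute_ι_map_inr (hω : IsPseudoscalar Q₂ c ω) (m : M₁) :
    Commute (ι (Q₁.prod Q₂) (m, 0)) (map (.inr Q₁ Q₂) ω) := by
  simpa using commute_map_mul_map_of_isOrtho_of_mem_evenOdd_zero_right (.inl Q₁ Q₂) (.inr Q₁ Q₂)
    (fun _ _ => .inl_inr _ _) (ι Q₁ m) ω (ι_mem_evenOdd_one Q₁ m) hω.mem_evenOdd_zero

theorem ι_tmul_add_one_tmul_ι_mul_self (hω : IsPseudoscalar Q₂ c ω) (hQ : Q₁' = (c : R) • Q₁)
    (m₁ : M₁) (m₂ : M₂) :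
    (ι Q₁' m₁ ⊗ₜ[R] ((↑c⁻¹ : R) • ω) + 1 ⊗ₜ ι Q₂ m₂) *
      (ι Q₁' m₁ ⊗ₜ[R] ((↑c⁻¹ : R) • ω) + 1 ⊗ₜ ι Q₂ m₂) = algebraMap R _ (Q₁ m₁ + Q₂ m₂) := by
  have left_sq : ι Q₁' m₁ ⊗ₜ[R] ((↑c⁻¹ : R) • ω) * ι Q₁' m₁ ⊗ₜ[R] ((↑c⁻¹ : R) • ω) =
      algebraMap R _ (Q₁ m₁) := by
    simp [hQ, hω.mul_self, Algebra.algebraMap_eq_smul_one, smul_smul, ← TensorProduct.smul_tmul',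
      Algebra.TensorProduct.one_def]
  have right_sq : (1 ⊗ₜ ι Q₂ m₂ * 1 ⊗ₜ ι Q₂ m₂ : CliffordAlgebra Q₁' ⊗[R] CliffordAlgebra Q₂) =
      algebraMap R _ (Q₂ m₂) := by
    simp [Algebra.algebraMap_eq_smul_one, Algebra.TensorProduct.one_def]
  have anticommute : ι Q₁' m₁ ⊗ₜ[R] ((↑c⁻¹ : R) • ω) * 1 ⊗ₜ ι Q₂ m₂ =
      -(1 ⊗ₜ ι Q₂ m₂ * ι Q₁' m₁ ⊗ₜ[R] ((↑c⁻¹ : R) • ω)) := by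
    simp [hω.mul_ι, TensorProduct.tmul_neg]
  rw [add_mul, mul_add, mul_add, left_sq, anticommute, right_sq, map_add]
  abel

variable (hω : IsPseudoscalar Q₂ c ω) (hQ : Q₁' = (c : R) • Q₁)

/-- The map `(m₁, m₂) ↦ m₁ ⊗ c⁻¹ω + 1 ⊗ m₂`, extended to the Clifford algebra. -/
def ofProd :
    CliffordAlgebra (Q₁.prod Q₂) →ₐ[R] CliffordAlgebra Q₁' ⊗[R] CliffordAlgebra Q₂ :=
  lift _ ⟨LinearMap.coprod ((TensorProduct.mk R _ _).flip ((↑c⁻¹ : R) • ω) ∘ₗ ι Q₁')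
    (Algebra.TensorProduct.includeRight.toLinearMap ∘ₗ ι Q₂),
    fun m => hω.ι_tmul_add_one_tmul_ι_mul_self hQ m.1 m.2⟩

theorem ofProd_ι (m₁ : M₁) (m₂ : M₂) :
    hω.ofProd hQ (ι _ (m₁, m₂)) = ι Q₁' m₁ ⊗ₜ ((↑c⁻¹ : R) • ω) + 1 ⊗ₜ ι Q₂ m₂ :=
  lift_ι_apply _ _ _

theorem ofProd_map_inr (x : CliffordAlgebra Q₂) :
    hω.ofProd hQ (map (.inr Q₁ Q₂) x) = 1 ⊗ₜ x := by
  suffices (hω.ofProd hQ).comp (map (.inr Q₁ Q₂)) = Algebra.TensorProduct.includeRight from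
    AlgHom.congr_fun this x
  ext m
  simp [ofProd_ι]

/-- The map `m ↦ mω`, extended to the Clifford algebra of the scaled form. -/
def ofLeft :
    CliffordAlgebra Q₁' →ₐ[R] CliffordAlgebra (Q₁.prod Q₂) :=
  lift _ ⟨LinearMap.mulRight R (map (.inr Q₁ Q₂) ω) ∘ₗ ι _ ∘ₗ LinearMap.inl R M₁ M₂, fun m => by
    simp [(hω.commute_ι_map_inr m).symm.mul_mul_mul_comm, ← map_mul, hω.mul_self, hQ, mul_comm]⟩

theorem ofLeft_ι (m : M₁) :
    hω.ofLeft hQ (ι Q₁' m) = ι (Q₁.prod Q₂) (m, 0) * map (.inr Q₁ Q₂) ω := by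
  simp [ofLeft]

theorem commute_ofLeft_map_inr :
    ∀ x y, Commute (hω.ofLeft hQ x) (map (.inr Q₁ Q₂) y) := by
  refine commute_of_commute_ι _ _ fun m₁ m₂ => ?_
  rw [ofLeft_ι]
  calc ι (Q₁.prod Q₂) (m₁, 0) * map (.inr Q₁ Q₂) ω * map (.inr Q₁ Q₂) (ι Q₂ m₂)
    _ = -(ι (Q₁.prod Q₂) (m₁, 0) * ι (Q₁.prod Q₂) (0, m₂)) * map (.inr Q₁ Q₂) ω := by
      rw [mul_assoc, ← map_mul, hω.mul_ι]
      simp [mul_assoc]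
    _ = map (.inr Q₁ Q₂) (ι Q₂ m₂) * (ι (Q₁.prod Q₂) (m₁, 0) * map (.inr Q₁ Q₂) ω) := by
      rw [ι_mul_ι_comm_of_isOrtho (IsOrtho.inl_inr m₁ m₂), neg_neg, mul_assoc, map_apply_ι]
      rfl

/-- The inverse of `ofProd`: `m₁ ⊗ 1 ↦ m₁ω` and `1 ⊗ m₂ ↦ m₂`. -/
def toProd :
    CliffordAlgebra Q₁' ⊗[R] CliffordAlgebra Q₂ →ₐ[R] CliffordAlgebra (Q₁.prod Q₂) :=
  Algebra.TensorProduct.lift (hω.ofLeft hQ) (map (.inr Q₁ Q₂)) (hω.commute_ofLeft_map_inr hQ)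

theorem ofProd_comp_toProd :
    (hω.ofProd hQ).comp (hω.toProd hQ) = AlgHom.id R _ := by
  ext m
  · simp [toProd, ofLeft_ι, ofProd_ι, ofProd_map_inr, hω.mul_self,
      Algebra.algebraMap_eq_smul_one, smul_smul]
  · simp [toProd, ofProd_ι]

theorem toProd_comp_ofProd :
    (hω.toProd hQ).comp (hω.ofProd hQ) = AlgHom.id R _ := by
  ext m
  · simp [toProd, ofLeft_ι, ofProd_ι, mul_assoc, ← map_mul, hω.mul_self,
      Algebra.algebraMap_eq_smul_one, smul_smul]
  · simp [toProd, ofProd_ι]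

/-- The Clifford algebra of an orthogonal sum as an ungraded tensor product. -/
def prodEquiv :
    CliffordAlgebra (Q₁.prod Q₂) ≃ₐ[R] CliffordAlgebra Q₁' ⊗[R] CliffordAlgebra Q₂ :=
  AlgEquiv.ofAlgHom _ _ (hω.ofProd_comp_toProd hQ) (hω.toProd_comp_ofProd hQ)

end IsPseudoscalar

end Pseudoscalar

section Trade

variable {M M₂ : Type*} [AddCommGroup M] [Module R M] [AddCommGroup M₂] [Module R M₂]
variable {P N : QuadraticForm R M₂} {ω : CliffordAlgebra P} {ω' : CliffordAlgebra N}

/-- The ungraded tensor decomposition of `Cl (Q₁ ⊥ P ⊥ P)`: of the two sign changes that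
`IsPseudoscalar.prodEquiv` makes, `Q₁` undergoes both and the first copy of `P` only one. -/
def prodProdEquiv (Q₁ : QuadraticForm R M) (hω : IsPseudoscalar P (-1) ω)
    (hω' : IsPseudoscalar N (-1) ω') (hN : N = -P) :
    CliffordAlgebra ((Q₁.prod P).prod P) ≃ₐ[R]
      (CliffordAlgebra Q₁ ⊗[R] CliffordAlgebra N) ⊗[R] CliffordAlgebra P :=
  (hω.prodEquiv (Q₁' := (-Q₁).prod N) (by ext; simp [hN, add_comm])).trans <|
    Algebra.TensorProduct.congr (hω'.prodEquiv (by simp)) .refl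

/-- Two copies of `P` may be traded for two copies of `-P`. -/
def prodProdNegEquiv (Q₁ : QuadraticForm R M) (hω : IsPseudoscalar P (-1) ω)
    (hω' : IsPseudoscalar N (-1) ω') (hN : N = -P) :
    CliffordAlgebra ((Q₁.prod P).prod P) ≃ₐ[R] CliffordAlgebra ((Q₁.prod N).prod N) :=
  (prodProdEquiv Q₁ hω hω' hN).trans <|
    (Algebra.TensorProduct.assoc R R R _ _ _).trans <|
    (Algebra.TensorProduct.congr .refl (Algebra.TensorProduct.comm R _ _)).trans <|
    (Algebra.TensorProduct.assoc R R R _ _ _).symm.trans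
    (prodProdEquiv Q₁ hω' hω (by simp [hN])).symm

end Trade

section Planes

/-- The diagonal binary quadratic form `⟨a, b⟩`, that is `(x, y) ↦ a x² + b y²`. -/
abbrev plane (a b : R) : QuadraticForm R (R × R) := CliffordAlgebraQuaternion.Q a b

variable {M : Type*} [AddCommGroup M] [Module R M]

theorem isPseudoscalar_plane {a b : R} {c : Rˣ} (hc : a * b = -c) :
    IsPseudoscalar (plane a b) c (ι (plane a b) (1, 0) * ι (plane a b) (0, 1)) := by
  simpa using isPseudoscalar_ι_mul_ι (Q₂ := plane a b) (Module.Basis.finTwoProd R)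
    (by simp [isOrtho_def]) (by simpa using hc)

/-- The exchange `⟨a, b⟩ ⊥ ⟨c, d⟩ ≅ ⟨a, c⟩ ⊥ ⟨b, d⟩`, next to a further summand. -/
def prodPlanesComm (Q₁ : QuadraticForm R M) (a b c d : R) :
    ((Q₁.prod (plane a b)).prod (plane c d)).IsometryEquiv
      ((Q₁.prod (plane a c)).prod (plane b d)) :=
  (prodAssoc _ _ _).trans <|
    (IsometryEquiv.prod (.refl Q₁) (.prodProdProdComm _ _ _ _)).trans (prodAssoc _ _ _).symm

/-- Four squares may be traded for four negated squares. -/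
def prodPlanesNegEquiv (Q₁ : QuadraticForm R M) :
    CliffordAlgebra ((Q₁.prod (plane 1 1)).prod (plane 1 1)) ≃ₐ[R]
      CliffordAlgebra ((Q₁.prod (plane (-1) (-1))).prod (plane (-1) (-1))) :=
  prodProdNegEquiv Q₁ (isPseudoscalar_plane (by simp)) (isPseudoscalar_plane (by simp))
    (by ext; simp [add_comm])

variable [Invertible (2 : R)]

/-- Adding a hyperbolic plane passes to `2 × 2` matrices. -/
def prodHyperbolicPlaneEquiv (Q₁ : QuadraticForm R M) :
    CliffordAlgebra (Q₁.prod (plane 1 (-1))) ≃ₐ[R]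
      Matrix (Fin 2) (Fin 2) (CliffordAlgebra Q₁) :=
  ((isPseudoscalar_plane (c := 1) (by simp)).prodEquiv (by simp)).trans <|
    (Algebra.TensorProduct.congr .refl
      (CliffordAlgebraQuaternion.equiv.trans (splitQuaternionEquiv R))).trans
    (matrixEquivTensor (Fin 2) R _).symm

/-- Adding `⟨1, 1⟩ ⊥ ⟨-1, -1⟩`, a sum of two hyperbolic planes, passes to `4 × 4` matrices. -/
def prodOppositePlanesEquiv (Q₁ : QuadraticForm R M) :
    CliffordAlgebra ((Q₁.prod (plane 1 1)).prod (plane (-1) (-1))) ≃ₐ[R]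
      Matrix (Fin 4) (Fin 4) (CliffordAlgebra Q₁) :=
  (equivOfIsometry (prodPlanesComm Q₁ 1 1 (-1) (-1))).trans <|
    (prodHyperbolicPlaneEquiv _).trans <|
    (prodHyperbolicPlaneEquiv Q₁).mapMatrix.trans (matrixMatrixEquiv R _ 2 2)

end Planes

/-- Adding one positive square raises `p` by one; its coordinate is put first. -/
def prodSqIsometry (p q : ℕ) :
    ((Q p q).prod ((1 : ℝ) • QuadraticMap.sq)).IsometryEquiv (Q (p + 1) q) where
  toLinearEquiv := LinearEquiv.prodComm ℝ _ _ ≪≫ₗ Fin.consLinearEquiv ℝ (fun _ => ℝ) ≪≫ₗ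
    LinearEquiv.funCongrLeft ℝ ℝ (finCongr (Nat.add_right_comm p 1 q))
  map_app' x := by
    simp only [Q, weightedSumSquares_apply, QuadraticMap.prod_apply]
    rw [← (finCongr (Nat.add_right_comm p 1 q)).symm.sum_comp, Fin.sum_univ_succ]
    simp [add_comm]

/-- Adding a Euclidean plane raises `p` by two. -/
def prodPlaneIsometry (p q : ℕ) :
    ((Q p q).prod (plane 1 1)).IsometryEquiv (Q (p + 2) q) :=
  (prodAssoc _ _ _).symm.trans <|
    ((prodSqIsometry p q).prod (.refl _)).trans (prodSqIsometry (p + 1) q)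

/-- Adding four Euclidean planes raises `p` by eight. -/
def prodFourPlanesIsometry (p q : ℕ) :
    (((((Q p q).prod (plane 1 1)).prod (plane 1 1)).prod (plane 1 1)).prod
      (plane 1 1)).IsometryEquiv (Q (p + 8) q) :=
  ((((((prodPlaneIsometry p q).prod (.refl _)).trans
    (prodPlaneIsometry (p + 2) q)).prod (.refl _)).trans
    (prodPlaneIsometry (p + 4) q)).prod (.refl _)).trans
    (prodPlaneIsometry (p + 6) q)

end BottPeriodicity

open BottPeriodicity CliffordAlgebra

theorem G_p8q_iso_matrix16_general {R M : Type*} [CommRing R] [Invertible (2 : R)]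
    [AddCommGroup M] [Module R M] (Q₁ : QuadraticForm R M) :
    Nonempty (CliffordAlgebra ((((Q₁.prod (plane 1 1)).prod (plane 1 1)).prod (plane 1 1)).prod
      (plane 1 1)) ≃ₐ[R] Matrix (Fin 16) (Fin 16) (CliffordAlgebra Q₁)) :=
  ⟨(prodPlanesNegEquiv _).trans <|
    (equivOfIsometry ((prodRightComm (Q₁.prod (plane 1 1)) _ _).prod (.refl _))).trans <|
    (prodOppositePlanesEquiv _).trans <|
    (prodOppositePlanesEquiv Q₁).mapMatrix.trans (matrixMatrixEquiv R _ 4 4)⟩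

theorem G_p8q_iso_matrix16 (p q : ℕ) :
    Nonempty (G (p + 8) q ≃ₐ[ℝ] Matrix (Fin 16) (Fin 16) (G p q)) := by
  obtain ⟨e⟩ := G_p8q_iso_matrix16_general (Q p q)
  exact ⟨(equivOfIsometry (prodFourPlanesIsometry p q)).symm.trans e⟩
end
end

section
/- For all natural numbers p and q, the complexification ℂ ⊗_ℝ G_{p,q} is isomorphic as a ℂ-algebra to the complex geometric algebra G_{p+q}(ℂ). -/
noncomputable section

/-- The quadratic form `Q_n(z) = Σ_{i<n} z_i²` on `Fin n → ℂ`. -/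
def QC (n : ℕ) : QuadraticForm ℂ (Fin n → ℂ) :=
  QuadraticMap.weightedSumSquares ℂ (fun _ : Fin n => (1 : ℂ))

/-- The complex geometric algebra `G_n(ℂ)`. -/
abbrev GC (n : ℕ) : Type := CliffordAlgebra (QC n)

/-!
The base change to `A` of a diagonal quadratic form `∑ wᵢ xᵢ²` over `R` is the diagonal form over
`A` with the same weights, and rescaling the coordinates by units `uᵢ` changes the weights by the
factors `uᵢ²`. Since forming the Clifford algebra commutes with base change, the weights matter only
modulo squares of units of `A`; over `ℂ`, rescaling by `I` removes each sign `-1 = I²`.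
-/

section BaseChange

open QuadraticMap
open scoped TensorProduct

variable {R A ι : Type*} [CommRing R] [CommRing A] [Algebra R A] [Invertible (2 : R)] [Fintype ι]

theorem weightedSumSquares_comp_piScalarRight [DecidableEq ι] (w : ι → R) :
    (weightedSumSquares A fun i => algebraMap R A (w i)).comp
        (TensorProduct.piScalarRight R A A ι).toLinearMap =
      QuadraticForm.baseChange A (weightedSumSquares R w) := by
  ext x
  simp [Algebra.smul_def]

variable (A) in
/-- The canonical isometry from the base change of a diagonal form to the diagonal form with the
images of its weights, given on pure tensors by `a ⊗ x ↦ (xᵢ • a)ᵢ`. -/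
def baseChangeWeightedSumSquaresIsometryEquiv [DecidableEq ι] (w : ι → R) :
    (QuadraticForm.baseChange A (weightedSumSquares R w)).IsometryEquiv
      (weightedSumSquares A fun i => algebraMap R A (w i)) where
  toLinearEquiv := TensorProduct.piScalarRight R A A ι
  map_app' := DFunLike.congr_fun (weightedSumSquares_comp_piScalarRight w)

theorem complexification_G_iso_GC_general {w : ι → R} {w' : ι → A} (u : ι → Aˣ)
    (hu : ∀ i, w' i * u i ^ 2 = algebraMap R A (w i)) :
    Nonempty (A ⊗[R] CliffordAlgebra (weightedSumSquares R w) ≃ₐ[A]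
      CliffordAlgebra (weightedSumSquares A w')) := by
  classical
  let rescaling := QuadraticForm.isometryEquivWeightedSumSquaresWeightedSumSquares (R := A) u hu
  exact ⟨(CliffordAlgebra.equivBaseChange A _).symm.trans <| CliffordAlgebra.equivOfIsometry <|
    (baseChangeWeightedSumSquaresIsometryEquiv A w).trans rescaling⟩

end BaseChange

open scoped TensorProduct in
theorem complexification_G_iso_GC (p q : ℕ) :
    Nonempty ((ℂ ⊗[ℝ] G p q) ≃ₐ[ℂ] GC (p + q)) :=
  complexification_G_iso_GC_general
    (fun i => if (i : ℕ) < p then 1 else Units.mk0 Complex.I Complex.I_ne_zero)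
    fun i => by split_ifs <;> simp
end
end
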